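/- arXiv:0801.0054 — 3 statements merged into one kernel-verified Lean document; each statement's English description precedes it below -/
import Mathlib

section
/- Let Σ(n) denote the sum of all 2^(n-1) entries of the n-th generation of the Calkin–Wilf tree. Then for every n ≥ 1, Σ(n) = 3·2^(n-2) − 1/2. -/
/-- The generations of the Calkin–Wilf tree: `CW 0 = [1/1]` is the first
generation, and each generation is obtained from the previous one by replacing
each entry `x` by `x/(x+1)` and `x+1`, in this order.  Thus the `n`-th
generation of the paper is `CW (n-1)`. -/
def CW : ℕ → List ℚ
  | 0 => [1]
  | n + 1 => (CW n).flatMap (fun x => [x / (x + 1), x + 1])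

/-! Inversion exchanges the two children `x / (x + 1)` and `x + 1` of `x` with those of `x⁻¹`, so
every generation read backwards is its list of inverses. As `x / (x + 1)` and
`x⁻¹ / (x⁻¹ + 1) = 1 / (x + 1)` add up to `1`, the left children of a generation have mean `1 / 2`,
while the right children exceed their parents by `1`. The `2 ^ n` entries of `CW n` hence give
`Σ (CW (n + 1)) = Σ (CW n) + 3 / 2 * 2 ^ n`, and the sum is geometric. -/

section DivisionSemiring

variable {K : Type*} [DivisionSemiring K] {x : K}

lemma inv_div_add_one (hx : x ≠ 0) : (x / (x + 1))⁻¹ = x⁻¹ + 1 := by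
  rw [inv_div, add_div, div_self hx, one_div, add_comm]

lemma inv_div_inv_add_one (hx : x ≠ 0) : x⁻¹ / (x⁻¹ + 1) = (x + 1)⁻¹ := by
  rw [← inv_inj, inv_div_add_one (inv_ne_zero hx), inv_inv, inv_inv]

end DivisionSemiring

lemma pos_of_mem_CW {n : ℕ} {x : ℚ} (hx : x ∈ CW n) : 0 < x := by
  induction n generalizing x with
  | zero => simp_all [CW]
  | succ n ih =>
    simp only [CW, List.mem_flatMap, List.mem_cons, List.not_mem_nil, or_false] at hx
    obtain ⟨y, hy, rfl | rfl⟩ := hx <;> have := ih hy <;> positivity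

lemma length_CW (n : ℕ) : (CW n).length = 2 ^ n := by
  induction n with
  | zero => rfl
  | succ n ih => simp [CW, List.length_flatMap, ih, pow_succ]

lemma reverse_CW (n : ℕ) : (CW n).reverse = (CW n).map (·⁻¹) := by
  induction n with
  | zero => simp [CW]
  | succ n ih =>
    simp only [CW, List.reverse_flatMap, ih, List.flatMap_map, List.map_flatMap]
    refine List.flatMap_congr fun x hx => ?_
    have hx₀ : x ≠ 0 := (pos_of_mem_CW hx).ne'
    simp [inv_div_add_one hx₀, inv_div_inv_add_one hx₀]

section AddCommMonoid

variable {M : Type*} [AddCommMonoid M]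

lemma sum_map_inv_CW (n : ℕ) (g : ℚ → M) :
    ((CW n).map fun x => g x⁻¹).sum = ((CW n).map g).sum := by
  rw [← List.sum_reverse ((CW n).map g), ← List.map_reverse, reverse_CW, List.map_map,
    Function.comp_def]

lemma two_nsmul_sum_map_CW (n : ℕ) {g : ℚ → M} {c : M} (hg : ∀ x, 0 < x → g x + g x⁻¹ = c) :
    2 • ((CW n).map g).sum = 2 ^ n • c :=
  calc 2 • ((CW n).map g).sum
      = ((CW n).map fun x => g x + g x⁻¹).sum := by
        rw [List.sum_map_add, sum_map_inv_CW, two_nsmul]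
    _ = ((CW n).map fun _ => c).sum := by
        rw [List.map_congr_left fun x hx => hg x (pos_of_mem_CW hx)]
    _ = 2 ^ n • c := by rw [List.map_const', List.sum_replicate, length_CW]

end AddCommMonoid

lemma sum_map_div_add_one_CW (n : ℕ) : ((CW n).map fun x => x / (x + 1)).sum = 2 ^ n / 2 := by
  have left_child_add_inv (x : ℚ) (hx : 0 < x) : x / (x + 1) + x⁻¹ / (x⁻¹ + 1) = 1 := by
    rw [inv_div_inv_add_one hx.ne', ← one_div, ← add_div, div_self (by positivity)]
  have two_mul_sum := two_nsmul_sum_map_CW n left_child_add_inv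
  simp only [nsmul_eq_mul, Nat.cast_ofNat, Nat.cast_pow, mul_one] at two_mul_sum
  linarith

lemma sum_map_add_one_CW (n : ℕ) : ((CW n).map (· + 1)).sum = (CW n).sum + 2 ^ n := by
  simp [List.sum_map_add, length_CW]

lemma sum_CW_succ (n : ℕ) : (CW (n + 1)).sum = (CW n).sum + 3 / 2 * 2 ^ n :=
  calc (CW (n + 1)).sum
      = ((CW n).map fun x => x / (x + 1) + (x + 1)).sum := by
        simp [CW, List.flatMap, List.sum_flatten, Function.comp_def]
    _ = 2 ^ n / 2 + ((CW n).sum + 2 ^ n) := by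
        rw [List.sum_map_add, sum_map_div_add_one_CW, sum_map_add_one_CW]
    _ = (CW n).sum + 3 / 2 * 2 ^ n := by ring

lemma sum_CW (n : ℕ) : (CW n).sum = 3 / 2 * 2 ^ n - 1 / 2 := by
  induction n with
  | zero => norm_num [CW]
  | succ n ih => rw [sum_CW_succ, ih]; ring

/-- The sum `Σ(n)` of all `2^(n-1)` entries of the `n`-th generation of the
Calkin–Wilf tree equals `3·2^(n-2) − 1/2`. -/
theorem calkin_wilf_generation_sum (n : ℕ) (hn : 1 ≤ n) :
    (CW (n - 1)).sum = 3 * (2 : ℚ) ^ ((n : ℤ) - 2) - 1 / 2 := by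
  obtain ⟨m, rfl⟩ := Nat.exists_eq_add_of_le' hn
  have zpow_eq : (2 : ℚ) ^ (((m + 1 : ℕ) : ℤ) - 2) = 2 ^ m / 2 := by
    rw [show ((m + 1 : ℕ) : ℤ) - 2 = m - 1 by push_cast; ring, zpow_sub_one₀ two_ne_zero,
      zpow_natCast, div_eq_mul_inv]
  rw [Nat.add_sub_cancel, sum_CW, zpow_eq]
  ring
end

section
/- For every n ≥ 1, the sum of the continued fraction values [a_0, a_1, …, a_m], taken over all finite sequences (a_0, a_1, …, a_m) with m ≥ 0, a_0 ≥ 0, a_j ≥ 1 for 1 ≤ j ≤ m, a_m ≥ 2 when m ≥ 1, and a_0 + a_1 + … + a_m = n, equals 2^(n-1)·(3/2 − 2^(−n)) = 3·2^(n-2) − 1/2. -/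
/-- The value of the finite continued fraction
`[a₀, a₁, …, a_m] = a₀ + 1/(a₁ + 1/(⋯ + 1/a_m))`, given as the list
`[a₀, a₁, …, a_m]` of its partial quotients. -/
def cfVal : List ℕ → ℚ
  | [] => 0
  | [a] => (a : ℚ)
  | a :: l => (a : ℚ) + (cfVal l)⁻¹

/-!
Adding 1 to the first partial quotient sends the value `x` to `x + 1`, and prepending a `0` after
that sends it to `1 / (x + 1)`. Together these two maps produce each expansion with sum `n + 1`
exactly once from the expansions with sum `n ≥ 1`, so there are `2 ^ (n - 1)` expansions with sum
`n`, and the total `S n` of their values satisfies `S (n + 1) = S n + 2 ^ (n - 1) + T n`, where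
`T n` is the sum of `1 / (x + 1)` over the values `x`. The two children `y = x + 1` and `1 / y` of
`x` satisfy `1 / (y + 1) + 1 / (1 / y + 1) = 1`, so `T (n + 1)` counts the expansions with sum `n`.
-/

theorem inv_add_one_add_inv_inv_add_one {K : Type*} [Field K] {y : K} (hy : y ≠ 0)
    (hy' : y + 1 ≠ 0) : (y + 1)⁻¹ + (y⁻¹ + 1)⁻¹ = 1 := by
  have h : y⁻¹ + 1 = (y + 1) / y := by field_simp; ring
  rw [h, inv_div, inv_eq_one_div, ← add_div, add_comm, div_self hy']

/-- Adds 1 to the first partial quotient `a₀` of `[a₀, a₁, …, a_m]`; the empty list is fixed. -/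
def incrHead (L : List ℕ) : List ℕ := L.modifyHead (· + 1)

/-- The continued fractions `[a₀, a₁, …, a_m]` with `a_j ≥ 1` for `1 ≤ j ≤ m`, in the normalization
`a_m ≥ 2` for `m ≥ 1` that makes the expansion of a rational unique. -/
def IsCanonicalCF (L : List ℕ) : Prop :=
  L ≠ [] ∧ (∀ a ∈ L.tail, 1 ≤ a) ∧ (2 ≤ L.length → 2 ≤ L.getLast!)

/-- The canonical continued fractions whose partial quotients add up to `n + 1` (not `n`: the
recursion fails at the bottom for `[0]`, which would have the non-canonical child `[0, 1]`). -/
def canonicalCFs : ℕ → Finset (List ℕ)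
  | 0 => {[1]}
  | n + 1 => (canonicalCFs n).image incrHead ∪ (canonicalCFs n).image (0 :: incrHead ·)

theorem incrHead_injective : Function.Injective incrHead := by
  rintro (_ | ⟨a, l⟩) (_ | ⟨b, l'⟩) h <;> simp_all [incrHead]

theorem zero_cons_incrHead_injective : Function.Injective (0 :: incrHead ·) :=
  List.cons_injective.comp incrHead_injective

theorem incrHead_ne_zero_cons (L M : List ℕ) : incrHead L ≠ 0 :: M := by
  cases L <;> simp [incrHead]

theorem sum_incrHead {L : List ℕ} (hL : L ≠ []) : (incrHead L).sum = L.sum + 1 := by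
  obtain ⟨a, l, rfl⟩ := List.exists_cons_of_ne_nil hL
  simp [incrHead, add_right_comm]

theorem sum_zero_cons_incrHead {L : List ℕ} (hL : L ≠ []) :
    (0 :: incrHead L).sum = L.sum + 1 := by
  rw [List.sum_cons, zero_add, sum_incrHead hL]

-- An empty tail needs no exception because `cfVal [] = 0` and `0⁻¹ = 0`.
theorem cfVal_cons (a : ℕ) (L : List ℕ) : cfVal (a :: L) = a + (cfVal L)⁻¹ := by
  cases L <;> simp [cfVal]

theorem cfVal_nonneg (L : List ℕ) : 0 ≤ cfVal L := by
  induction L with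
  | nil => exact le_rfl
  | cons a L ih => rw [cfVal_cons]; positivity

theorem cfVal_incrHead {L : List ℕ} (hL : L ≠ []) : cfVal (incrHead L) = cfVal L + 1 := by
  obtain ⟨a, l, rfl⟩ := List.exists_cons_of_ne_nil hL
  simp [incrHead, cfVal_cons, add_right_comm]

theorem cfVal_zero_cons_incrHead {L : List ℕ} (hL : L ≠ []) :
    cfVal (0 :: incrHead L) = (cfVal L + 1)⁻¹ := by
  rw [cfVal_cons, cfVal_incrHead hL, Nat.cast_zero, zero_add]

theorem isCanonicalCF_incrHead {L : List ℕ} : IsCanonicalCF (incrHead L) ↔ IsCanonicalCF L := by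
  rcases L with _ | ⟨a, _ | ⟨b, l⟩⟩ <;> simp [IsCanonicalCF, incrHead, List.getLast!]

theorem isCanonicalCF_zero_cons_incrHead {L : List ℕ} (hL : L ≠ []) :
    IsCanonicalCF (0 :: incrHead L) ↔ IsCanonicalCF L ∧ L ≠ [0] := by
  match L, hL with
  | [a], _ => simp [IsCanonicalCF, incrHead, List.getLast!, Nat.one_le_iff_ne_zero]
  | a :: b :: l, _ => simp [IsCanonicalCF, incrHead, List.getLast!]

theorem IsCanonicalCF.exists_eq_incrHead {L : List ℕ} (hL : IsCanonicalCF L) (hL0 : L ≠ [0]) :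
    ∃ M ≠ [], L = incrHead M ∨ L = 0 :: incrHead M := by
  match L, hL with
  | (a + 1) :: l, _ => exact ⟨a :: l, List.cons_ne_nil a l, .inl rfl⟩
  | 0 :: (b + 1) :: l, _ => exact ⟨b :: l, List.cons_ne_nil b l, .inr rfl⟩
  | [0], _ => exact absurd rfl hL0
  | 0 :: 0 :: l, ⟨_, htail, _⟩ => simp at htail
  | [], ⟨hne, _⟩ => exact absurd rfl hne

theorem IsCanonicalCF.sum_eq_zero_iff {L : List ℕ} (hL : IsCanonicalCF L) :
    L.sum = 0 ↔ L = [0] := by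
  match L, hL with
  | [a], _ => simp
  | a :: b :: l, ⟨_, htail, _⟩ =>
    have hb : 1 ≤ b := htail b (by simp)
    simp [Nat.ne_zero_of_lt hb]
  | [], ⟨hne, _⟩ => exact absurd rfl hne

theorem isCanonicalCF_and_sum_eq_one_iff {L : List ℕ} :
    IsCanonicalCF L ∧ L.sum = 1 ↔ L = [1] := by
  constructor
  · rintro ⟨hL, hsum⟩
    obtain ⟨M, hne, rfl | rfl⟩ := hL.exists_eq_incrHead (by rintro rfl; simp at hsum)
    · have hM := isCanonicalCF_incrHead.1 hL
      rw [sum_incrHead hne, Nat.add_eq_right, hM.sum_eq_zero_iff] at hsum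
      rw [hsum, incrHead, List.modifyHead_cons]
    · obtain ⟨hM, hM0⟩ := (isCanonicalCF_zero_cons_incrHead hne).1 hL
      rw [sum_zero_cons_incrHead hne, Nat.add_eq_right, hM.sum_eq_zero_iff] at hsum
      exact absurd hsum hM0
  · rintro rfl
    simp [IsCanonicalCF]

theorem mem_canonicalCFs {n : ℕ} {L : List ℕ} :
    L ∈ canonicalCFs n ↔ IsCanonicalCF L ∧ L.sum = n + 1 := by
  induction n generalizing L with
  | zero => rw [canonicalCFs, Finset.mem_singleton, zero_add, isCanonicalCF_and_sum_eq_one_iff]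
  | succ n ih =>
    simp only [canonicalCFs, Finset.mem_union, Finset.mem_image, ih]
    constructor
    · rintro (⟨M, ⟨hM, hsum⟩, rfl⟩ | ⟨M, ⟨hM, hsum⟩, rfl⟩)
      · exact ⟨isCanonicalCF_incrHead.2 hM, by rw [sum_incrHead hM.1, hsum]⟩
      · have hM0 : M ≠ [0] := by rintro rfl; simp at hsum
        exact ⟨(isCanonicalCF_zero_cons_incrHead hM.1).2 ⟨hM, hM0⟩,
          by rw [sum_zero_cons_incrHead hM.1, hsum]⟩
    · rintro ⟨hL, hsum⟩
      obtain ⟨M, hne, rfl | rfl⟩ := hL.exists_eq_incrHead (by rintro rfl; simp at hsum)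
      · rw [sum_incrHead hne, Nat.add_right_cancel_iff] at hsum
        exact .inl ⟨M, ⟨isCanonicalCF_incrHead.1 hL, hsum⟩, rfl⟩
      · rw [sum_zero_cons_incrHead hne, Nat.add_right_cancel_iff] at hsum
        exact .inr ⟨M, ⟨((isCanonicalCF_zero_cons_incrHead hne).1 hL).1, hsum⟩, rfl⟩

theorem sum_comp_cfVal_canonicalCFs_succ {M : Type*} [AddCommMonoid M] (f : ℚ → M) (n : ℕ) :
    ∑ L ∈ canonicalCFs (n + 1), f (cfVal L) =
      ∑ L ∈ canonicalCFs n, (f (cfVal L + 1) + f (cfVal L + 1)⁻¹) := by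
  have hdisj : Disjoint ((canonicalCFs n).image incrHead)
      ((canonicalCFs n).image (0 :: incrHead ·)) := by
    simp only [Finset.disjoint_left, Finset.mem_image, not_exists, not_and]
    rintro _ ⟨L, -, rfl⟩ M - h
    exact incrHead_ne_zero_cons L _ h.symm
  rw [canonicalCFs, Finset.sum_union hdisj, Finset.sum_image incrHead_injective.injOn,
    Finset.sum_image zero_cons_incrHead_injective.injOn, ← Finset.sum_add_distrib]
  refine Finset.sum_congr rfl fun L hL => ?_
  have hne : L ≠ [] := (mem_canonicalCFs.1 hL).1.1
  rw [cfVal_incrHead hne, cfVal_zero_cons_incrHead hne]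

theorem card_canonicalCFs (n : ℕ) : (canonicalCFs n).card = 2 ^ n := by
  induction n with
  | zero => rfl
  | succ n ih =>
    rw [Finset.card_eq_sum_ones, sum_comp_cfVal_canonicalCFs_succ (fun _ => 1), Finset.sum_const,
      ih, smul_eq_mul, pow_succ]

theorem sum_inv_cfVal_add_one_canonicalCFs (n : ℕ) :
    ∑ L ∈ canonicalCFs n, (cfVal L + 1)⁻¹ = 2 ^ n / 2 := by
  cases n with
  | zero => norm_num [canonicalCFs, cfVal]
  | succ n =>
    have hpair (L : List ℕ) : (cfVal L + 1 + 1)⁻¹ + ((cfVal L + 1)⁻¹ + 1)⁻¹ = 1 := by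
      have := cfVal_nonneg L
      exact inv_add_one_add_inv_inv_add_one (by positivity) (by positivity)
    rw [sum_comp_cfVal_canonicalCFs_succ fun x => (x + 1)⁻¹]
    simp [hpair, card_canonicalCFs, pow_succ]

theorem sum_cfVal_canonicalCFs (n : ℕ) :
    ∑ L ∈ canonicalCFs n, cfVal L = 3 * 2 ^ n / 2 - 1 / 2 := by
  induction n with
  | zero => norm_num [canonicalCFs, cfVal]
  | succ n ih =>
    calc ∑ L ∈ canonicalCFs (n + 1), cfVal L
        = ∑ L ∈ canonicalCFs n, (cfVal L + 1 + (cfVal L + 1)⁻¹) :=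
          sum_comp_cfVal_canonicalCFs_succ id n
      _ = (3 * 2 ^ n / 2 - 1 / 2) + 2 ^ n + 2 ^ n / 2 := by
          simp [Finset.sum_add_distrib, ih, card_canonicalCFs, sum_inv_cfVal_add_one_canonicalCFs]
      _ = 3 * 2 ^ (n + 1) / 2 - 1 / 2 := by ring

/-- For every `n ≥ 1`, the sum of the continued fraction values
`[a₀, a₁, …, a_m]` over all finite sequences with `a₀ ≥ 0`, `a_j ≥ 1` for
`1 ≤ j ≤ m`, `a_m ≥ 2` when `m ≥ 1`, and `a₀ + a₁ + ⋯ + a_m = n`, equals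
`3·2^(n-2) − 1/2 = 2^(n-1)·(3/2 − 2^(−n))`. -/
theorem sum_continued_fractions_with_partial_quotient_sum (n : ℕ) (hn : 1 ≤ n) :
    ∑ᶠ L ∈ {L : List ℕ | L ≠ [] ∧ (∀ a ∈ L.tail, 1 ≤ a) ∧
        (2 ≤ L.length → 2 ≤ L.getLast! ) ∧ L.sum = n},
      cfVal L = 3 * (2 : ℚ) ^ ((n : ℤ) - 2) - 1 / 2 := by
  obtain ⟨k, rfl⟩ := Nat.exists_eq_add_of_le' hn
  have hset : {L : List ℕ | L ≠ [] ∧ (∀ a ∈ L.tail, 1 ≤ a) ∧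
      (2 ≤ L.length → 2 ≤ L.getLast!) ∧ L.sum = k + 1} = canonicalCFs k := by
    ext L
    simp only [Set.mem_ofPred_eq, Finset.mem_coe, mem_canonicalCFs, IsCanonicalCF, and_assoc]
  have hpow : (2 : ℚ) ^ (((k + 1 : ℕ) : ℤ) - 2) = 2 ^ k / 2 := by
    rw [show ((k + 1 : ℕ) : ℤ) - 2 = k - 1 by lia, zpow_sub_one₀ two_ne_zero, zpow_natCast,
      div_eq_mul_inv]
  rw [hset, finsum_mem_coe_finset, sum_cfVal_canonicalCFs, hpow, mul_div_assoc]
end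

section
/- Let Ω = {0,1}^ℕ carry the infinite product of Bernoulli(1/2) measures, and define the random walk X : Ω → ℕ → ℚ by X(ω)(0) = 1 and X(ω)(n+1) = X(ω)(n) + 1 if ω(n) = 1, and X(ω)(n+1) = X(ω)(n)/(X(ω)(n) + 1) if ω(n) = 0. Then for any real numbers 0 ≤ α < β, for almost every ω ∈ Ω there exists m ∈ ℕ with α < X(ω)(m) < β. -/
/-!
Both tree moves are nonexpansive on the positive rationals. A long run of left moves followed by
one right move brings every starting point close to the root `1`, and then the path from the root
to a rational `r` brings it equally close to `r`. So for each interval meeting `(0, ∞)` there is a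
finite word of moves leading into it from any position, and by Borel–Cantelli almost every
sequence of independent moves contains every finite word infinitely often.
-/

open MeasureTheory Filter
open scoped ENNReal

/-- The random walk on the Calkin–Wilf tree driven by a sequence of coin flips
`ω : ℕ → Bool`: it starts at the root `1/1`, and at step `n` it moves from the
current value `x` to the right child `x + 1` if `ω n = true` and to the left
child `x/(x+1)` if `ω n = false`. -/
def cwWalk (ω : ℕ → Bool) : ℕ → ℚ
  | 0 => 1
  | n + 1 => if ω n then cwWalk ω n + 1 else cwWalk ω n / (cwWalk ω n + 1)

open ProbabilityTheory Topology Function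

/-- One move on the Calkin–Wilf tree: right for `true`, left for `false`. The arguments are ordered
so that `w.foldl cwStep x` is the endpoint of the path `w` started at `x`. -/
def cwStep (x : ℚ) (b : Bool) : ℚ :=
  if b then x + 1 else x / (x + 1)

@[simp] lemma cwStep_true (x : ℚ) : cwStep x true = x + 1 := rfl

@[simp] lemma cwStep_false (x : ℚ) : cwStep x false = x / (x + 1) := rfl

lemma cwStep_pos {x : ℚ} (hx : 0 < x) (b : Bool) : 0 < cwStep x b := by
  cases b <;> simp only [cwStep_true, cwStep_false] <;> positivity

lemma foldl_cwStep_pos (w : List Bool) {x : ℚ} (hx : 0 < x) : 0 < w.foldl cwStep x := by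
  induction w generalizing x with
  | nil => exact hx
  | cons b _ ih => exact ih (cwStep_pos hx b)

lemma abs_cwStep_sub_le {x y : ℚ} (hx : 0 < x) (hy : 0 < y) (b : Bool) :
    |cwStep x b - cwStep y b| ≤ |x - y| := by
  cases b
  · have hdiff : cwStep x false - cwStep y false = (x - y) / ((x + 1) * (y + 1)) := by
      simp only [cwStep_false]
      field_simp
      ring
    have hden : 1 ≤ (x + 1) * (y + 1) :=
      one_le_mul_of_one_le_of_one_le (by linarith) (by linarith)
    rw [hdiff, abs_div, abs_of_pos (zero_lt_one.trans_le hden)]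
    exact div_le_self (abs_nonneg _) hden
  · simp

lemma abs_foldl_cwStep_sub_le (w : List Bool) {x y : ℚ} (hx : 0 < x) (hy : 0 < y) :
    |w.foldl cwStep x - w.foldl cwStep y| ≤ |x - y| := by
  induction w generalizing x y with
  | nil => rfl
  | cons b _ ih =>
    exact (ih (cwStep_pos hx b) (cwStep_pos hy b)).trans (abs_cwStep_sub_le hx hy b)

lemma foldl_cwStep_replicate_false (j : ℕ) {x : ℚ} (hx : 0 < x) :
    (List.replicate j false).foldl cwStep x = x / (j * x + 1) := by
  induction j generalizing x with
  | zero => simp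
  | succ j ih =>
    rw [List.replicate_succ, List.foldl_cons, ih (cwStep_pos hx false), cwStep_false]
    push_cast
    field_simp
    ring

lemma exists_forall_abs_foldl_cwStep_sub_one_lt {ε : ℚ} (hε : 0 < ε) :
    ∃ w : List Bool, ∀ x : ℚ, 0 < x → |w.foldl cwStep x - 1| < ε := by
  obtain ⟨j, hj⟩ := exists_nat_gt (1 / ε)
  refine ⟨List.replicate j false ++ [true], fun x hx => ?_⟩
  rw [List.foldl_concat, foldl_cwStep_replicate_false j hx, cwStep_true, add_sub_cancel_right,
    abs_of_pos (by positivity), div_lt_iff₀ (by positivity)]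
  have : 1 * x < j * ε * x := by
    gcongr
    exact (div_lt_iff₀ hε).1 hj
  linarith

-- Reading the subtractive Euclidean algorithm backwards gives the path from the root to `a / b`.
lemma exists_foldl_cwStep_one_eq_div (a b : ℕ) (ha : 0 < a) (hb : 0 < b) :
    ∃ w : List Bool, w.foldl cwStep 1 = (a / b : ℚ) := by
  have ha' : (a : ℚ) ≠ 0 := by positivity
  have hb' : (b : ℚ) ≠ 0 := by positivity
  rcases lt_trichotomy a b with hab | rfl | hab
  · obtain ⟨w, hw⟩ := exists_foldl_cwStep_one_eq_div a (b - a) ha (Nat.sub_pos_of_lt hab)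
    have hsub : (b - a : ℚ) ≠ 0 := sub_ne_zero.2 (by exact_mod_cast hab.ne')
    refine ⟨w ++ [false], ?_⟩
    rw [List.foldl_concat, hw, cwStep_false, Nat.cast_sub hab.le, div_add_one hsub,
      div_div_div_cancel_right₀ hsub, add_sub_cancel]
  · exact ⟨[], (div_self ha').symm⟩
  · obtain ⟨w, hw⟩ := exists_foldl_cwStep_one_eq_div (a - b) b (Nat.sub_pos_of_lt hab) hb
    refine ⟨w ++ [true], ?_⟩
    rw [List.foldl_concat, hw, cwStep_true, Nat.cast_sub hab.le, div_add_one hb', sub_add_cancel]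
termination_by a + b

lemma exists_foldl_cwStep_one_eq {r : ℚ} (hr : 0 < r) :
    ∃ w : List Bool, w.foldl cwStep 1 = r := by
  lift r to ℚ≥0 using hr.le
  obtain ⟨w, hw⟩ := exists_foldl_cwStep_one_eq_div r.num r.den
    (NNRat.num_pos.2 (by exact_mod_cast hr)) r.den_pos
  refine ⟨w, hw.trans ?_⟩
  simpa only [NNRat.cast_div, NNRat.cast_natCast] using congrArg ((↑) : ℚ≥0 → ℚ) r.num_div_den

lemma exists_forall_abs_foldl_cwStep_sub_lt {r ε : ℚ} (hr : 0 < r) (hε : 0 < ε) :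
    ∃ w : List Bool, ∀ x : ℚ, 0 < x → |w.foldl cwStep x - r| < ε := by
  obtain ⟨u, hu⟩ := exists_forall_abs_foldl_cwStep_sub_one_lt hε
  obtain ⟨v, rfl⟩ := exists_foldl_cwStep_one_eq hr
  refine ⟨u ++ v, fun x hx => ?_⟩
  rw [List.foldl_append]
  exact (abs_foldl_cwStep_sub_le v (foldl_cwStep_pos u hx) one_pos).trans_lt (hu x hx)

lemma exists_forall_foldl_cwStep_mem_Ioo {α β : ℝ} (hαβ : α < β) (hβ : 0 < β) :
    ∃ w : List Bool, ∀ x : ℚ, 0 < x → ((w.foldl cwStep x : ℚ) : ℝ) ∈ Set.Ioo α β := by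
  obtain ⟨r, hr, hrβ⟩ := exists_rat_btwn (max_lt hαβ hβ)
  obtain ⟨hαr, hr⟩ := max_lt_iff.1 hr
  have hnhds : ((↑) : ℚ → ℝ) ⁻¹' Set.Ioo α β ∈ 𝓝 r :=
    (isOpen_Ioo.preimage Rat.continuous_coe_real).mem_nhds ⟨hαr, hrβ⟩
  obtain ⟨ε, hε, hball⟩ := (nhds_basis_abs_sub_lt r).mem_iff.1 hnhds
  obtain ⟨w, hw⟩ := exists_forall_abs_foldl_cwStep_sub_lt (by exact_mod_cast hr) hε
  exact ⟨w, fun x hx => hball (hw x hx)⟩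

/-- The finite word `w` occurs in the sequence `ω` starting at position `n`. -/
def OccursAt {A : Type*} (w : List A) (ω : ℕ → A) (n : ℕ) : Prop :=
  ∀ i (hi : i < w.length), ω (n + i) = w[i]

lemma cwWalk_succ (ω : ℕ → Bool) (n : ℕ) : cwWalk ω (n + 1) = cwStep (cwWalk ω n) (ω n) := rfl

lemma cwWalk_pos (ω : ℕ → Bool) (n : ℕ) : 0 < cwWalk ω n := by
  induction n with
  | zero => exact one_pos
  | succ n ih => exact cwStep_pos ih (ω n)

lemma OccursAt.cwWalk_add_length {w : List Bool} {ω : ℕ → Bool} {n : ℕ} (h : OccursAt w ω n) :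
    cwWalk ω (n + w.length) = w.foldl cwStep (cwWalk ω n) := by
  induction w generalizing n with
  | nil => rfl
  | cons b w ih =>
    have hhead : ω n = b := h 0 (by simp)
    have htail : OccursAt w ω (n + 1) := fun i hi => by
      rw [add_assoc, add_comm 1 i]
      exact h (i + 1) (Nat.succ_lt_succ hi)
    rw [List.length_cons, List.foldl_cons, ← hhead, ← cwWalk_succ, ← ih htail, add_assoc,
      add_comm 1]

lemma frequently_cwWalk_mem_Ioo {ω : ℕ → Bool}
    (hω : ∀ w : List Bool, ∃ᶠ n in atTop, OccursAt w ω n) {α β : ℝ} (hαβ : α < β) (hβ : 0 < β) :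
    ∃ᶠ m in atTop, (cwWalk ω m : ℝ) ∈ Set.Ioo α β := by
  obtain ⟨w, hw⟩ := exists_forall_foldl_cwStep_mem_Ioo hαβ hβ
  refine (tendsto_add_atTop_nat w.length).frequently ((hω w).mono fun n hn => ?_)
  rw [hn.cwWalk_add_length]
  exact hw _ (cwWalk_pos ω n)

lemma pairwise_disjoint_Ico_mul (k : ℕ) :
    Pairwise (Disjoint on fun n => Finset.Ico (n * k) ((n + 1) * k)) := by
  have hmono : Monotone fun n => n * k := fun _ _ h => Nat.mul_le_mul_right k h
  intro m n hmn
  simpa [onFun, ← Finset.disjoint_coe] using hmono.pairwise_disjoint_on_Ico_succ hmn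

section ProductMeasure

variable {ι κ A : Type*} [MeasurableSpace A] [MeasurableSingletonClass A]

lemma measurableSet_setOf_forall_mem_eq (s : Finset ι) (g : ι → A) :
    MeasurableSet {ω : ι → A | ∀ i ∈ s, ω i = g i} := by
  have hinter : {ω : ι → A | ∀ i ∈ s, ω i = g i} = ⋂ i ∈ s, (fun ω => ω i) ⁻¹' {g i} := by
    ext ω
    simp
  rw [hinter]
  exact s.measurableSet_biInter fun i _ => measurable_pi_apply i (measurableSet_singleton (g i))

lemma iIndepSet_cylinder_of_pairwise_disjoint {μ : Measure (ι → A)} {p : A → ℝ≥0∞}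
    (hcyl : ∀ (s : Finset ι) (g : ι → A), μ {ω | ∀ i ∈ s, ω i = g i} = ∏ i ∈ s, p (g i))
    {B : κ → Finset ι} (hB : Pairwise (Disjoint on B)) (g : ι → A) :
    iIndepSet (fun n => {ω : ι → A | ∀ i ∈ B n, ω i = g i}) μ := by
  classical
  rw [iIndepSet_iff_meas_biInter fun n => measurableSet_setOf_forall_mem_eq (B n) g]
  intro s
  have hinter : ⋂ n ∈ s, {ω : ι → A | ∀ i ∈ B n, ω i = g i} =
      {ω | ∀ i ∈ s.biUnion B, ω i = g i} := by
    ext ω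
    simp only [Set.mem_iInter, Set.mem_ofPred_eq, Finset.mem_biUnion]
    grind
  simp only [hinter, hcyl, Finset.prod_biUnion (hB.set_pairwise _)]

lemma ae_frequently_cylinder {μ : Measure (ι → A)} {p : A → ℝ≥0∞}
    (hcyl : ∀ (s : Finset ι) (g : ι → A), μ {ω | ∀ i ∈ s, ω i = g i} = ∏ i ∈ s, p (g i))
    {B : ℕ → Finset ι} (hB : Pairwise (Disjoint on B)) {g : ι → A}
    (hsum : ∑' n, ∏ i ∈ B n, p (g i) = ∞) :
    ∀ᵐ ω ∂μ, ∃ᶠ n in atTop, ∀ i ∈ B n, ω i = g i := by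
  have hmeas (n : ℕ) := measurableSet_setOf_forall_mem_eq (B n) g
  have hind := iIndepSet_cylinder_of_pairwise_disjoint hcyl hB g
  have : IsProbabilityMeasure μ := hind.isProbabilityMeasure
  have hlim := measure_limsup_eq_one hmeas hind (by simpa only [hcyl] using hsum)
  have hae := (mem_ae_iff_prob_eq_one (MeasurableSet.measurableSet_limsup hmeas)).2 hlim
  filter_upwards [hae] with ω hω
  exact mem_limsup_iff_frequently_mem.1 hω

lemma ae_frequently_occursAt {μ : Measure (ℕ → A)} {p : A → ℝ≥0∞}
    (hcyl : ∀ (s : Finset ℕ) (g : ℕ → A), μ {ω | ∀ i ∈ s, ω i = g i} = ∏ i ∈ s, p (g i))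
    {w : List A} (hw : ∀ a ∈ w, p a ≠ 0) :
    ∀ᵐ ω ∂μ, ∃ᶠ n in atTop, OccursAt w ω n := by
  rcases eq_or_ne w [] with rfl | hne
  · exact ae_of_all _ fun _ => Frequently.of_forall fun _ _ hi => absurd hi (Nat.not_lt_zero _)
  set k := w.length
  have hk : 0 < k := List.length_pos_iff.2 hne
  let g (i : ℕ) : A := w[i % k]'(Nat.mod_lt i hk)
  have hg (n i : ℕ) (hi : i < k) : g (n * k + i) = w[i] := by
    simp only [g, Nat.mul_add_mod_self_right, Nat.mod_eq_of_lt hi]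
  have hblock (n : ℕ) : ∏ i ∈ Finset.Ico (n * k) ((n + 1) * k), p (g i) =
      ∏ i ∈ Finset.range k, p (g i) := by
    rw [Finset.prod_Ico_eq_prod_range, add_one_mul, Nat.add_sub_cancel_left]
    simp only [g, Nat.mul_add_mod_self_right]
  have hsum : ∑' n, ∏ i ∈ Finset.Ico (n * k) ((n + 1) * k), p (g i) = ∞ := by
    simp only [hblock]
    exact ENNReal.tsum_const_eq_top_of_ne_zero
      (Finset.prod_ne_zero_iff.2 fun i _ => hw _ (List.getElem_mem _))
  filter_upwards [ae_frequently_cylinder hcyl (pairwise_disjoint_Ico_mul k) hsum] with ω hω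
  refine (tendsto_id.atTop_mul_const' hk).frequently (hω.mono fun n hn i hi => ?_)
  exact (hn (n * k + i) (Finset.mem_Ico.2 ⟨by lia, by lia⟩)).trans (hg n i hi)

end ProductMeasure

theorem calkin_wilf_random_walk_visits_interval_general
    {μ : Measure (ℕ → Bool)} {p : Bool → ℝ≥0∞} (hp : ∀ b, p b ≠ 0)
    (hcyl : ∀ (s : Finset ℕ) (g : ℕ → Bool), μ {ω | ∀ i ∈ s, ω i = g i} = ∏ i ∈ s, p (g i)) :
    ∀ᵐ ω ∂μ, ∀ α β : ℝ, α < β → 0 < β →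
      ∃ᶠ m in atTop, (cwWalk ω m : ℝ) ∈ Set.Ioo α β := by
  have hwords : ∀ᵐ ω ∂μ, ∀ w : List Bool, ∃ᶠ n in atTop, OccursAt w ω n :=
    ae_all_iff.2 fun _ => ae_frequently_occursAt hcyl fun b _ => hp b
  filter_upwards [hwords] with ω hω α β hαβ hβ
  exact frequently_cwWalk_mem_Ioo hω hαβ hβ

/-- Let `μ` be the infinite product of Bernoulli(1/2) measures on
`Ω = {0,1}^ℕ`, i.e. the probability measure giving each cylinder set
determined by finitely many coordinates its natural measure `(1/2)^#coords`.
Then for any reals `0 ≤ α < β`, for `μ`-almost every `ω` the random walk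
`X(ω)` on the Calkin–Wilf tree visits the interval `(α, β)`. -/
theorem calkin_wilf_random_walk_visits_interval
    (μ : Measure (ℕ → Bool)) (hprob : IsProbabilityMeasure μ)
    (hcyl : ∀ (s : Finset ℕ) (g : ℕ → Bool),
      μ {ω | ∀ i ∈ s, ω i = g i} = (1 / 2 : ℝ≥0∞) ^ s.card)
    (α β : ℝ) (hα : 0 ≤ α) (hαβ : α < β) :
    ∀ᵐ ω ∂μ, ∃ m : ℕ, α < (cwWalk ω m : ℝ) ∧ (cwWalk ω m : ℝ) < β := by
  have hcyl' (s : Finset ℕ) (g : ℕ → Bool) :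
      μ {ω | ∀ i ∈ s, ω i = g i} = ∏ _i ∈ s, (1 / 2 : ℝ≥0∞) := by
    rw [hcyl, Finset.prod_const]
  filter_upwards [calkin_wilf_random_walk_visits_interval_general
    (p := fun _ => 1 / 2) (by simp) hcyl'] with ω hω
  exact (hω α β hαβ (hα.trans_lt hαβ)).exists
end
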